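/- arXiv:1112.2719 — 4 statements merged into one kernel-verified Lean document; each statement's English description precedes it below -/
import Mathlib

section
/- Fix an integer r ≥ 3. For every admissible triple (i,j,k), all the quantum factorials appearing in the defining expression of θ(i,j,k) (namely Δ_{x+y+z}!, Δ_{x−1}!, Δ_{y−1}!, Δ_{z−1}!, Δ_{y+z−1}!, Δ_{x+z−1}!, Δ_{x+y−1}! where x = (j+k−i)/2, y = (i+k−j)/2, z = (i+j−k)/2) are nonzero, and θ(i,j,k) ≠ 0. -/
/-- The variable `A = exp(πi/(2r))`. -/
noncomputable def A (r : ℕ) : ℂ := Complex.exp (Real.pi * Complex.I / (2 * r))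

/-- The quantum dimension `Δ_n = (−1)^n (A^{2(n+1)} − A^{−2(n+1)})/(A^2 − A^{−2})`. -/
noncomputable def Δ (r : ℕ) (n : ℕ) : ℂ :=
  (-1) ^ n * (A r ^ (2 * ((n : ℤ) + 1)) - A r ^ (-(2 * ((n : ℤ) + 1)))) /
    (A r ^ (2 : ℤ) - A r ^ (-2 : ℤ))

/-- Shifted quantum factorial: `qfact r n = Δ_{n−1}! = Δ_{n−1} · Δ_{n−2} ⋯ Δ_0`,
so `qfact r 0 = Δ_{−1}! = 1` and `qfact r (n+1) = Δ_n!`. -/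
noncomputable def qfact (r : ℕ) : ℕ → ℂ
  | 0 => 1
  | n + 1 => Δ r n * qfact r n

/-- A triple `(i,j,k)` of colors in `I = {0,…,r−2}` is *admissible* if
`i ≤ j+k`, `j ≤ i+k`, `k ≤ i+j`, `i+j+k` is even, and `i+j+k ≤ 2(r−2)`. -/
def Admissible (r i j k : ℕ) : Prop :=
  i ≤ r - 2 ∧ j ≤ r - 2 ∧ k ≤ r - 2 ∧
  i ≤ j + k ∧ j ≤ i + k ∧ k ≤ i + j ∧ 2 ∣ (i + j + k) ∧ i + j + k ≤ 2 * (r - 2)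

/-- `θ(i,j,k) = Δ_{x+y+z}! Δ_{x−1}! Δ_{y−1}! Δ_{z−1}! / (Δ_{y+z−1}! Δ_{x+z−1}! Δ_{x+y−1}!)`
where `x = (j+k−i)/2`, `y = (i+k−j)/2`, `z = (i+j−k)/2`. -/
noncomputable def theta (r i j k : ℕ) : ℂ :=
  let x := (j + k - i) / 2
  let y := (i + k - j) / 2
  let z := (i + j - k) / 2
  qfact r (x + y + z + 1) * qfact r x * qfact r y * qfact r z /
    (qfact r (y + z) * qfact r (x + z) * qfact r (x + y))

theorem A_diff_ne_zero (r n : ℕ) (hn : n + 1 < r) :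
    A r ^ (2 * ((n : ℤ) + 1)) - A r ^ (-(2 * ((n : ℤ) + 1))) ≠ 0 := by
  intro h
  have hr : (r : ℂ) ≠ 0 := by
    have : r ≠ 0 := by omega
    exact_mod_cast this
  rw [sub_eq_zero] at h
  unfold A at h
  rw [← Complex.exp_int_mul, ← Complex.exp_int_mul, Complex.exp_eq_exp_iff_exists_int] at h
  obtain ⟨N, hN⟩ := h
  have hpi : (Real.pi : ℂ) ≠ 0 := by exact_mod_cast Real.pi_ne_zero
  have hI := Complex.I_ne_zero
  have h2 : ((n : ℂ) + 1) = N * r := by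
    push_cast at hN
    field_simp at hN
    linear_combination hN / 2
  have h3 : (n : ℤ) + 1 = N * r := by exact_mod_cast h2
  have hd : r ∣ n + 1 := by
    have : (r : ℤ) ∣ ((n + 1 : ℕ) : ℤ) := ⟨N, by push_cast; linarith⟩
    exact_mod_cast this
  have := Nat.le_of_dvd (by omega) hd
  omega

theorem Δ_ne_zero (r n : ℕ) (hr : 3 ≤ r) (hn : n + 1 < r) : Δ r n ≠ 0 := by
  unfold Δ
  have h0 := A_diff_ne_zero r 0 (by omega)
  refine div_ne_zero (mul_ne_zero (by simp) (A_diff_ne_zero r n hn)) ?_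
  simpa using h0

theorem qfact_ne_zero (r : ℕ) (hr : 3 ≤ r) (n : ℕ) (hn : n < r) : qfact r n ≠ 0 := by
  induction n with
  | zero => simp [qfact]
  | succ n ih => exact mul_ne_zero (Δ_ne_zero r n hr hn) (ih (by omega))

/-- for every admissible triple `(i,j,k)` all the quantum factorials
`Δ_{x+y+z}!, Δ_{x−1}!, Δ_{y−1}!, Δ_{z−1}!, Δ_{y+z−1}!, Δ_{x+z−1}!, Δ_{x+y−1}!` appearing
in the definition of `θ(i,j,k)` are nonzero, and `θ(i,j,k) ≠ 0`. -/
theorem theta_ne_zero (r : ℕ) (hr : 3 ≤ r) (i j k : ℕ) (hadm : Admissible r i j k) :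
    qfact r ((j + k - i) / 2 + (i + k - j) / 2 + (i + j - k) / 2 + 1) ≠ 0 ∧
    qfact r ((j + k - i) / 2) ≠ 0 ∧
    qfact r ((i + k - j) / 2) ≠ 0 ∧
    qfact r ((i + j - k) / 2) ≠ 0 ∧
    qfact r ((i + k - j) / 2 + (i + j - k) / 2) ≠ 0 ∧
    qfact r ((j + k - i) / 2 + (i + j - k) / 2) ≠ 0 ∧
    qfact r ((j + k - i) / 2 + (i + k - j) / 2) ≠ 0 ∧
    theta r i j k ≠ 0 := by
  obtain ⟨h1, h2, h3, h4, h5, h6, h7, h8⟩ := hadm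
  have q := qfact_ne_zero r hr
  have e1 := q ((j + k - i) / 2 + (i + k - j) / 2 + (i + j - k) / 2 + 1) (by omega)
  have e2 := q ((j + k - i) / 2) (by omega)
  have e3 := q ((i + k - j) / 2) (by omega)
  have e4 := q ((i + j - k) / 2) (by omega)
  have e5 := q ((i + k - j) / 2 + (i + j - k) / 2) (by omega)
  have e6 := q ((j + k - i) / 2 + (i + j - k) / 2) (by omega)
  have e7 := q ((j + k - i) / 2 + (i + k - j) / 2) (by omega)
  refine ⟨e1, e2, e3, e4, e5, e6, e7, ?_⟩
  exact div_ne_zero (mul_ne_zero (mul_ne_zero (mul_ne_zero e1 e2) e3) e4)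
    (mul_ne_zero (mul_ne_zero e5 e6) e7)
end

section
/- Fix an integer r ≥ 3 and let A = exp(πi/(2r)). Then N := Σ_{n=0}^{r−2} Δ_n^2 equals r/(2·sin^2(π/r)). -/
theorem delta_sq (r : ℕ) (n : ℕ) :
    (Δ r n) ^ 2 = (Complex.exp (2 * Real.pi * Complex.I / r) ^ (n + 1)
      + (Complex.exp (2 * Real.pi * Complex.I / r))⁻¹ ^ (n + 1) - 2) /
      (-4 * (Real.sin (Real.pi / r) : ℂ) ^ 2) := by
  have hA : A r ≠ 0 := Complex.exp_ne_zero _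
  have hz : Complex.exp (2 * Real.pi * Complex.I / r) = A r ^ 4 := by
    rw [A, ← Complex.exp_nat_mul]
    congr 1
    push_cast
    ring
  have hden : (A r ^ (2 : ℤ) - A r ^ (-2 : ℤ)) ^ 2 =
      -4 * (Real.sin (Real.pi / r) : ℂ) ^ 2 := by
    have h1 : A r ^ (2 : ℤ) = Complex.exp (Real.pi / r * Complex.I) := by
      rw [A, ← Complex.exp_int_mul]
      congr 1
      push_cast
      ring
    have h2 : A r ^ (-2 : ℤ) = Complex.exp (-(Real.pi / r) * Complex.I) := by
      rw [A, ← Complex.exp_int_mul]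
      congr 1
      push_cast
      ring
    rw [h1, h2, Complex.ofReal_sin, Complex.sin]
    push_cast
    ring_nf
    simp only [Complex.I_sq]
    ring
  have hnum : ((-1) ^ n * (A r ^ (2 * ((n : ℤ) + 1)) - A r ^ (-(2 * ((n : ℤ) + 1))))) ^ 2 =
      (A r ^ 4) ^ (n + 1) + (A r ^ 4)⁻¹ ^ (n + 1) - 2 := by
    have h1 : A r ^ (2 * ((n : ℤ) + 1)) = A r ^ (2 * (n + 1)) := by
      rw [← zpow_natCast]
      push_cast
      rfl
    have hs : ((-1 : ℂ) ^ n) ^ 2 = 1 := by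
      rw [← pow_mul, mul_comm, pow_mul]
      simp
    have h4 : (A r ^ 4) ^ (n + 1) = (A r ^ (2 * (n + 1))) ^ 2 := by
      rw [← pow_mul, ← pow_mul]
      congr 1
      ring
    have hne : A r ^ (2 * (n + 1)) ≠ 0 := pow_ne_zero _ hA
    rw [mul_pow, hs, zpow_neg, h1, inv_pow, h4]
    field_simp
    ring
  rw [Δ, div_pow, hden, hnum, hz]

/-- for r ≥ 3, `N = Σ_{n=0}^{r−2} Δ_n² = r/(2 sin²(π/r))`. -/
theorem omega_circle_value (r : ℕ) (hr : 3 ≤ r) :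
    ∑ n ∈ Finset.range (r - 1), (Δ r n) ^ 2 =
      (r : ℂ) / (2 * (Real.sin (Real.pi / r) : ℂ) ^ 2) := by
  have hr0 : r ≠ 0 := by omega
  have hp := Complex.isPrimitiveRoot_exp r hr0
  have hs0 : (Real.sin (Real.pi / r) : ℂ) ≠ 0 := by
    have hr' : (3 : ℝ) ≤ r := by exact_mod_cast hr
    have : 0 < Real.sin (Real.pi / r) := by
      apply Real.sin_pos_of_pos_of_lt_pi
      · have := Real.pi_pos
        positivity
      · exact div_lt_self Real.pi_pos (by linarith)
    exact_mod_cast this.ne'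
  have g1 := hp.geom_sum_eq_zero (by omega)
  have g2 := hp.inv.geom_sum_eq_zero (by omega)
  obtain ⟨k, rfl⟩ : ∃ k, r = k + 1 := ⟨r - 1, by omega⟩
  rw [Finset.sum_range_succ', pow_zero] at g1 g2
  simp only [delta_sq]
  rw [← Finset.sum_div, Finset.sum_sub_distrib, Finset.sum_add_distrib, Nat.add_sub_cancel,
    eq_neg_of_add_eq_zero_left g1, eq_neg_of_add_eq_zero_left g2]
  simp only [Finset.sum_const, Finset.card_range, nsmul_eq_mul]
  rw [div_eq_div_iff (by simpa using hs0) (by simpa using hs0)]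
  push_cast
  ring
end

section
/- Fix an integer r ≥ 3 and let A = exp(πi/(2r)). For all i, j ∈ I = {0, 1, …, r−2}, the sum of Δ_k over all k ∈ I such that the triple (i,j,k) is admissible equals Δ_i · Δ_j. -/
instance (r i j k : ℕ) : Decidable (Admissible r i j k) := by
  unfold Admissible; infer_instance

theorem A_ne (r : ℕ) : A r ≠ 0 := Complex.exp_ne_zero _

theorem A_pow (r : ℕ) (hr : 3 ≤ r) : A r ^ (4 * (r : ℤ)) = 1 := by
  have h0 : (r : ℂ) ≠ 0 := by exact_mod_cast (by omega : r ≠ 0)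
  rw [A, ← Complex.exp_int_mul, ← Complex.exp_two_pi_mul_I]
  congr 1
  push_cast
  field_simp
  ring

theorem den_ne (r : ℕ) (hr : 3 ≤ r) : A r ^ (2 : ℤ) - A r ^ (-2 : ℤ) ≠ 0 := by
  intro h
  have h0 : (r : ℂ) ≠ 0 := by exact_mod_cast (by omega : r ≠ 0)
  have hp := (Complex.isPrimitiveRoot_exp r (by omega)).ne_one (by omega)
  apply hp
  have h4 : A r ^ (4 : ℤ) = 1 := by
    have : A r ^ (4 : ℤ) = A r ^ (2 : ℤ) * A r ^ (2 : ℤ) := by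
      rw [← zpow_add₀ (A_ne r)]; norm_num
    rw [this]
    nth_rewrite 1 [sub_eq_zero.mp h]
    rw [← zpow_add₀ (A_ne r)]; norm_num
  rw [← h4, A, ← Complex.exp_int_mul]
  congr 1
  push_cast
  field_simp
  ring

/-- The telescoping function. -/
noncomputable def cc (r : ℕ) (n : ℤ) : ℂ := A r ^ (2 * n) + A r ^ (-(2 * n))

theorem cc_neg (r : ℕ) (n : ℤ) : cc r (-n) = cc r n := by
  unfold cc
  rw [add_comm]
  congr 2 <;> ring

theorem cc_per (r : ℕ) (hr : 3 ≤ r) (n : ℤ) : cc r (2 * r - n) = cc r n := by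
  unfold cc
  have h1 : (2 * (2 * (r : ℤ) - n)) = 4 * r + -(2 * n) := by ring
  rw [h1, neg_add, zpow_add₀ (A_ne r), zpow_add₀ (A_ne r), zpow_neg _ (4 * (r : ℤ)), A_pow r hr]
  simp [add_comm]

theorem mul_key (r : ℕ) (a b : ℤ) :
    (A r ^ (2 * a) - A r ^ (-(2 * a))) * (A r ^ (2 * b) - A r ^ (-(2 * b)))
      = cc r (a + b) - cc r (a - b) := by
  unfold cc
  have h := A_ne r
  rw [sub_mul, mul_sub, mul_sub]
  simp only [← zpow_add₀ h]
  rw [show 2 * a + 2 * b = 2 * (a + b) by ring, show 2 * a + -(2 * b) = 2 * (a - b) by ring,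
    show -(2 * a) + 2 * b = -(2 * (a - b)) by ring,
    show -(2 * a) + -(2 * b) = -(2 * (a + b)) by ring]
  ring

theorem delta_mul (r : ℕ) (hr : 3 ≤ r) (i j : ℕ) :
    Δ r i * Δ r j = (-1) ^ (i + j) * (cc r (i + j + 2) - cc r (i - j)) /
      (A r ^ (2 : ℤ) - A r ^ (-2 : ℤ)) ^ 2 := by
  have h := mul_key r (i + 1) (j + 1)
  rw [show (i : ℤ) + 1 + (j + 1) = i + j + 2 by ring,
    show (i : ℤ) + 1 - (j + 1) = i - j by ring] at h
  rw [← h]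
  unfold Δ
  rw [div_mul_div_comm, pow_add]
  congr 1 <;> ring

theorem delta_single (r : ℕ) (hr : 3 ≤ r) (k : ℕ) :
    Δ r k = (-1) ^ k * (cc r (k + 2) - cc r k) /
      (A r ^ (2 : ℤ) - A r ^ (-2 : ℤ)) ^ 2 := by
  have h := mul_key r (k + 1) 1
  rw [show (k : ℤ) + 1 + 1 = k + 2 by ring, show (k : ℤ) + 1 - 1 = k by ring] at h
  rw [← h]
  have hd := den_ne r hr
  unfold Δ
  rw [show (2 * 1 : ℤ) = 2 by norm_num]
  rw [div_eq_div_iff hd (pow_ne_zero 2 hd)]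
  ring

theorem tele (r : ℕ) (hr : 3 ≤ r) (m N : ℕ) :
    ∑ t ∈ Finset.range N, Δ r (m + 2 * t) =
      (-1) ^ m * (cc r (m + 2 * N) - cc r m) /
      (A r ^ (2 : ℤ) - A r ^ (-2 : ℤ)) ^ 2 := by
  induction N with
  | zero => simp
  | succ N ih =>
    rw [Finset.sum_range_succ, ih, delta_single r hr]
    rw [pow_add, pow_mul]
    push_cast
    rw [show (m : ℤ) + 2 * N + 2 = m + 2 * (N + 1) by ring]
    ring

theorem aux (r : ℕ) (hr : 3 ≤ r) (i j : ℕ) (hi : i ≤ r - 2) (hij : j ≤ i) :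
    ∑ k ∈ (Finset.range (r - 1)).filter (fun k => Admissible r i j k), Δ r k =
      Δ r i * Δ r j := by
  obtain ⟨m, rfl⟩ := Nat.exists_eq_add_of_le hij
  have key : ∀ N : ℕ, N = min (j + 1) (r - 1 - (j + m)) →
      (Finset.range (r - 1)).filter (fun k => Admissible r (j + m) j k) =
      (Finset.range N).image (fun t => m + 2 * t) := by
    intro N hN
    ext k
    rw [Finset.mem_filter]
    simp only [Finset.mem_range, Finset.mem_image]
    unfold Admissible
    constructor
    · rintro ⟨h1, h2⟩
      refine ⟨(k - m) / 2, ?_, ?_⟩ <;> omega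
    · rintro ⟨t, ht, rfl⟩
      omega
  rw [key _ rfl, Finset.sum_image (by intro a _ b _ h; simp only at h; omega), tele r hr,
    delta_mul r hr]
  have hs : (-1 : ℂ) ^ (j + m + j) = (-1) ^ m := by
    rw [show j + m + j = m + 2 * j by ring, pow_add, pow_mul]; simp
  rw [hs]
  congr 3
  · rcases le_total (j + 1) (r - 1 - (j + m)) with h | h
    · rw [min_eq_left h]; congr 1; push_cast; ring
    · rw [min_eq_right h, ← cc_per r hr]; congr 1; omega
  · congr 1; push_cast; ring

/-- for all `i, j ∈ I = {0,…,r−2}`, the sum of `Δ_k` over all `k ∈ I` such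
that `(i,j,k)` is admissible equals `Δ_i · Δ_j`. -/
theorem sum_delta_admissible (r : ℕ) (hr : 3 ≤ r) (i j : ℕ)
    (hi : i ≤ r - 2) (hj : j ≤ r - 2) :
    ∑ k ∈ (Finset.range (r - 1)).filter (fun k => Admissible r i j k), Δ r k =
      Δ r i * Δ r j := by
  rcases le_total j i with h | h
  · exact aux r hr i j hi h
  · rw [mul_comm, ← aux r hr j i hj h]
    apply Finset.sum_congr _ (fun _ _ => rfl)
    ext k
    rw [Finset.mem_filter, Finset.mem_filter, Finset.mem_range]
    unfold Admissible
    omega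
end

section
/- Fix an integer r ≥ 3 and let A = exp(πi/(2r)). Then the sum of Δ_i · Δ_j · Δ_k over all admissible triples (i,j,k) ∈ I^3 equals r^2/(4·sin^4(π/r)). (This is the value of the quantum invariant ⟨·⟩_H of the trivial genus-2 handlebody-knot, computed from a theta-curve diagram.) -/
open Finset in
theorem tg_fusion_sum (θ : ℝ) (a n : ℕ) :
    2 * Real.sin θ * ∑ t ∈ range n, Real.sin (((a + 2 * t : ℕ) + 1 : ℝ) * θ) =
      Real.cos (a * θ) - Real.cos ((a + 2 * n) * θ) := by
  induction n with
  | zero => simp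
  | succ n ih =>
    rw [sum_range_succ, mul_add, ih]
    have e1 : ((a : ℝ) + 2 * n) * θ = ((a + 2 * n : ℕ) + 1 : ℝ) * θ - θ := by push_cast; ring
    have e2 : ((a : ℝ) + 2 * (n + 1 : ℕ)) * θ = ((a + 2 * n : ℕ) + 1 : ℝ) * θ + θ := by
      push_cast; ring
    rw [e1, e2, Real.cos_sub, Real.cos_add]
    ring

open Finset in
theorem tg_cos_sum (θ : ℝ) (n : ℕ) :
    4 * Real.sin θ * ∑ i ∈ range n, Real.sin ((i + 1 : ℝ) * θ) ^ 2 =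
      2 * n * Real.sin θ - (Real.sin ((2 * n + 1) * θ) - Real.sin θ) := by
  induction n with
  | zero => simp
  | succ n ih =>
    rw [sum_range_succ, mul_add, ih]
    have e1 : (2 * (n : ℝ) + 1) * θ = 2 * ((n + 1 : ℝ) * θ) - θ := by ring
    have e2 : (2 * ((n + 1 : ℕ) : ℝ) + 1) * θ = 2 * ((n + 1 : ℝ) * θ) + θ := by
      push_cast; ring
    rw [e1, e2, Real.sin_sub, Real.sin_add, Real.cos_two_mul, Real.cos_sq']
    push_cast
    ring

theorem tg_sin_pos (r : ℕ) (hr : 3 ≤ r) : 0 < Real.sin (Real.pi / r) := by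
  have h : (3 : ℝ) ≤ r := by exact_mod_cast hr
  apply Real.sin_pos_of_pos_of_lt_pi
  · have := Real.pi_pos
    positivity
  · exact div_lt_self Real.pi_pos (by linarith)

/-- real form of the quantum dimension -/
noncomputable def tgS (r n : ℕ) : ℝ :=
  (-1) ^ n * Real.sin ((n + 1 : ℝ) * (Real.pi / r)) / Real.sin (Real.pi / r)

theorem tg_A_zpow (r : ℕ) (hr : 3 ≤ r) (m : ℤ) :
    A r ^ (2 * m) - A r ^ (-(2 * m)) = 2 * Complex.I * (Real.sin (m * (Real.pi / r)) : ℂ) := by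
  have hr0 : (r : ℂ) ≠ 0 := by
    have : r ≠ 0 := by omega
    exact_mod_cast this
  unfold A
  rw [← Complex.exp_int_mul, ← Complex.exp_int_mul, Complex.ofReal_sin, Complex.sin]
  have e1 : ((2 * m : ℤ) : ℂ) * (Real.pi * Complex.I / (2 * r)) =
      ((m * (Real.pi / r) : ℝ) : ℂ) * Complex.I := by
    push_cast; field_simp
  have e2 : ((-(2 * m) : ℤ) : ℂ) * (Real.pi * Complex.I / (2 * r)) =
      -((m * (Real.pi / r) : ℝ) : ℂ) * Complex.I := by
    push_cast; field_simp
  rw [e1, e2]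
  linear_combination (-(Complex.exp (-((m * (Real.pi / r) : ℝ) : ℂ) * Complex.I) -
    Complex.exp (((m * (Real.pi / r) : ℝ) : ℂ) * Complex.I))) * Complex.I_sq

theorem tg_Δ (r : ℕ) (hr : 3 ≤ r) (n : ℕ) : Δ r n = (tgS r n : ℂ) := by
  have h1 := tg_A_zpow r hr ((n : ℤ) + 1)
  have h2 := tg_A_zpow r hr 1
  norm_num at h2
  unfold Δ tgS
  rw [h1]
  have h3 : (A r ^ (2 : ℤ) - A r ^ (-2 : ℤ)) = 2 * Complex.I * (Real.sin (Real.pi / r) : ℂ) := by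
    rw [← mul_one (2 : ℤ)]
    have := tg_A_zpow r hr 1
    simpa using this
  rw [h3]
  have hs : (Real.sin (Real.pi / r) : ℂ) ≠ 0 := by
    exact_mod_cast (tg_sin_pos r hr).ne'
  push_cast at hs ⊢
  field_simp

open Finset in
theorem tg_fusion_le (r : ℕ) (hr : 3 ≤ r) (i j : ℕ) (hi : i < r - 1) (hji : j ≤ i) :
    ∑ k ∈ (range (r - 1)).filter (fun k => Admissible r i j k), tgS r k = tgS r i * tgS r j := by
  set θ := Real.pi / r with hθ
  have hs := tg_sin_pos r hr
  have hr0 : (r : ℝ) ≠ 0 := by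
    have : r ≠ 0 := by omega
    exact_mod_cast this
  have hset : (range (r - 1)).filter (fun k => Admissible r i j k) =
      (range (min j (r - 2 - i) + 1)).image (fun t => (i - j) + 2 * t) := by
    ext k
    rw [mem_filter, mem_image]
    simp only [mem_range]
    unfold Admissible
    constructor
    · rintro ⟨h1, h⟩
      refine ⟨(k - (i - j)) / 2, ?_, ?_⟩ <;> omega
    · rintro ⟨t, ht, rfl⟩
      omega
  rw [hset, sum_image (by intro x _ y _ h; simp only at h; omega)]
  have hterm : ∀ t ∈ range (min j (r - 2 - i) + 1), tgS r ((i - j) + 2 * t) =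
      (-1) ^ i * (-1) ^ j / Real.sin θ * Real.sin ((((i - j) + 2 * t : ℕ) + 1 : ℝ) * θ) := by
    intro t _
    have : ((-1 : ℝ)) ^ ((i - j) + 2 * t) = (-1) ^ i * (-1) ^ j := by
      obtain ⟨d, rfl⟩ := Nat.exists_eq_add_of_le hji
      rw [Nat.add_sub_cancel_left, pow_add, pow_add, pow_mul]
      have : ((-1 : ℝ)) ^ j * (-1) ^ j = 1 := by rw [← mul_pow]; simp
      simp only [even_two, Even.neg_pow, one_pow, mul_one]
      linear_combination (-(-1 : ℝ) ^ d) * this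
    unfold tgS
    rw [this]
    ring
  rw [sum_congr rfl hterm, ← mul_sum]
  have key := tg_fusion_sum θ (i - j) (min j (r - 2 - i) + 1)
  have hcos : Real.cos ((((i - j : ℕ) : ℝ) + 2 * ((min j (r - 2 - i) + 1 : ℕ) : ℝ)) * θ) =
      Real.cos ((i + 1) * θ + (j + 1) * θ) := by
    rcases le_total j (r - 2 - i) with h | h
    · rw [min_eq_left h]
      congr 1
      push_cast [Nat.cast_sub hji]
      ring
    · rw [min_eq_right h]
      have e : ((i - j : ℕ) : ℝ) + 2 * ((r - 2 - i + 1 : ℕ) : ℝ) = 2 * r - (i + j + 2) := by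
        have : (i - j) + 2 * (r - 2 - i + 1) + (i + j + 2) = 2 * r := by omega
        have h2 : ((i - j : ℕ) : ℝ) + 2 * ((r - 2 - i + 1 : ℕ) : ℝ) + (i + j + 2) = 2 * r := by
          exact_mod_cast this
        linarith
      rw [e]
      have e2 : (2 * (r : ℝ) - (i + j + 2)) * θ = 2 * Real.pi - ((i + 1) * θ + (j + 1) * θ) := by
        rw [hθ]; field_simp; ring
      rw [e2, Real.cos_two_pi_sub]
  have hcos2 : Real.cos (((i - j : ℕ) : ℝ) * θ) = Real.cos ((i + 1) * θ - (j + 1) * θ) := by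
    congr 1
    push_cast [Nat.cast_sub hji]
    ring
  rw [hcos, hcos2, Real.cos_add, Real.cos_sub] at key
  have key2 : Real.sin θ * ∑ t ∈ range (min j (r - 2 - i) + 1),
      Real.sin ((((i - j) + 2 * t : ℕ) + 1 : ℝ) * θ) =
      Real.sin ((i + 1) * θ) * Real.sin ((j + 1) * θ) := by linarith
  unfold tgS
  rw [← hθ] at hs ⊢
  have hs' := hs.ne'
  generalize Real.sin ((i + 1) * θ) = x at key2 ⊢
  generalize Real.sin ((j + 1) * θ) = y at key2 ⊢
  generalize (∑ t ∈ range (min j (r - 2 - i) + 1),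
      Real.sin ((((i - j) + 2 * t : ℕ) + 1 : ℝ) * θ)) = z at key2 ⊢
  field_simp
  linear_combination key2

open Finset in
theorem tg_fusion (r : ℕ) (hr : 3 ≤ r) (i j : ℕ) (hi : i < r - 1) (hj : j < r - 1) :
    ∑ k ∈ (range (r - 1)).filter (fun k => Admissible r i j k), tgS r k = tgS r i * tgS r j := by
  rcases le_total j i with h | h
  · exact tg_fusion_le r hr i j hi h
  · rw [mul_comm, ← tg_fusion_le r hr j i hj h]
    congr 1
    ext k
    rw [mem_filter, mem_filter, mem_range]
    unfold Admissible
    omega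

open Finset in
theorem tg_sq_sum (r : ℕ) (hr : 3 ≤ r) :
    ∑ i ∈ range (r - 1), tgS r i ^ 2 = r / (2 * Real.sin (Real.pi / r) ^ 2) := by
  have hs := (tg_sin_pos r hr).ne'
  have hr0 : (r : ℝ) ≠ 0 := by
    have : r ≠ 0 := by omega
    exact_mod_cast this
  have key := tg_cos_sum (Real.pi / r) (r - 1)
  have e : (2 * ((r - 1 : ℕ) : ℝ) + 1) * (Real.pi / r) = 2 * Real.pi - Real.pi / r := by
    rw [Nat.cast_sub (by omega)]
    field_simp
    push_cast
    ring
  rw [e, Real.sin_two_pi_sub, Nat.cast_sub (by omega)] at key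
  have hterm : ∀ i ∈ range (r - 1), tgS r i ^ 2 =
      1 / Real.sin (Real.pi / r) ^ 2 * Real.sin ((i + 1 : ℝ) * (Real.pi / r)) ^ 2 := by
    intro i _
    unfold tgS
    rw [div_pow, mul_pow, ← pow_mul, mul_comm i 2, pow_mul]
    simp
    ring
  rw [sum_congr rfl hterm, ← mul_sum]
  have k2 : ∑ i ∈ range (r - 1), Real.sin ((i + 1 : ℝ) * (Real.pi / r)) ^ 2 = r / 2 := by
    have : (4 * Real.sin (Real.pi / r)) ≠ 0 := by positivity
    apply mul_left_cancel₀ this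
    rw [key]
    push_cast
    ring
  rw [k2]
  field_simp

/-- for r ≥ 3, the sum of `Δ_i Δ_j Δ_k` over all admissible triples
`(i,j,k) ∈ I³` equals `r²/(4 sin⁴(π/r))` (the invariant `⟨·⟩_H` of the trivial genus-2
handlebody-knot computed from a theta-curve diagram). -/
theorem trivial_genus_two_invariant (r : ℕ) (hr : 3 ≤ r) :
    ∑ p ∈ (Finset.range (r - 1) ×ˢ Finset.range (r - 1) ×ˢ Finset.range (r - 1)).filter
        (fun p => Admissible r p.1 p.2.1 p.2.2),
      Δ r p.1 * Δ r p.2.1 * Δ r p.2.2 =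
    (r : ℂ) ^ 2 / (4 * (Real.sin (Real.pi / r) : ℂ) ^ 4) := by
  have hreal : ∑ p ∈ (Finset.range (r - 1) ×ˢ Finset.range (r - 1) ×ˢ Finset.range (r - 1)).filter
        (fun p => Admissible r p.1 p.2.1 p.2.2), tgS r p.1 * tgS r p.2.1 * tgS r p.2.2 =
      (r : ℝ) ^ 2 / (4 * Real.sin (Real.pi / r) ^ 4) := by
    rw [Finset.sum_filter, Finset.sum_product]
    have h : ∀ i ∈ Finset.range (r - 1),
        ∑ q ∈ Finset.range (r - 1) ×ˢ Finset.range (r - 1),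
          (if Admissible r i q.1 q.2 then tgS r i * tgS r q.1 * tgS r q.2 else 0) =
        tgS r i ^ 2 * ∑ j ∈ Finset.range (r - 1), tgS r j ^ 2 := by
      intro i hi
      rw [Finset.sum_product, Finset.mul_sum]
      refine Finset.sum_congr rfl fun j hj => ?_
      dsimp only
      rw [← Finset.sum_filter, ← Finset.mul_sum,
        tg_fusion r hr i j (Finset.mem_range.1 hi) (Finset.mem_range.1 hj)]
      ring
    rw [Finset.sum_congr rfl h, ← Finset.sum_mul, tg_sq_sum r hr]
    have hs := (tg_sin_pos r hr).ne'
    field_simp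
    norm_num
  simp only [tg_Δ r hr]
  exact_mod_cast congrArg (Complex.ofReal) hreal
end
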